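/- arXiv:2509.08387 — 2 statements merged into one kernel-verified Lean document; each statement's English description precedes it below -/
import Mathlib

section
/- Let a budget profile be given (integer m ≥ 1, strictly increasing positive real privacy budgets ε_1 < ε_2 < ⋯ < ε_m, positive integer counts n_1, …, n_m, n = n_1 + ⋯ + n_m, Z = (n − n_m)(n − n_m + 1/4)) and a sensitivity I > 0. Then for every real β > 0, the OBS error of the β-scaled profile satisfies errO_I(β) ≤ min( 2I²/(βε_1)² , Z + 2I²/(βε_m)² ). -/
open Finset

/-- Sampling probability p_k(θ) = (e^{ε_k} − 1)/(e^{θ} − 1). -/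
noncomputable def samplingP {m : ℕ} (ε : Fin m → ℝ) (k : Fin m) (θ : ℝ) : ℝ :=
  (Real.exp (ε k) - 1) / (Real.exp θ - 1)

/-- Sampling error err_s(θ). -/
noncomputable def errS {m : ℕ} (ε : Fin m → ℝ) (nn : Fin m → ℕ) (θ : ℝ) : ℝ :=
  (∑ k, if ε k < θ then (nn k : ℝ) * samplingP ε k θ * (1 - samplingP ε k θ) else 0)
    + (∑ k, if ε k < θ then (nn k : ℝ) * (1 - samplingP ε k θ) else 0) ^ 2

/-- Noise error err_dp(θ) = 2I²/θ². -/
noncomputable def errDP (I θ : ℝ) : ℝ := 2 * I ^ 2 / θ ^ 2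

/-- Total error err(θ) = err_s(θ) + err_dp(θ). -/
noncomputable def errTot {m : ℕ} (ε : Fin m → ℝ) (nn : Fin m → ℕ) (I θ : ℝ) : ℝ :=
  errS ε nn θ + errDP I θ

/-- OBS error: errO_I = min_{1 ≤ j ≤ m} err(ε_j). -/
noncomputable def errO {m : ℕ} (hm : 0 < m) (ε : Fin m → ℝ) (nn : Fin m → ℕ) (I : ℝ) : ℝ :=
  Finset.univ.inf' (Finset.univ_nonempty_iff.mpr (Fin.pos_iff_nonempty.mp hm))
    (fun j => errTot ε nn I (ε j))

/-- Index of the smallest budget ε_1. -/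
def firstIdx {m : ℕ} (hm : 0 < m) : Fin m := ⟨0, hm⟩

/-- Index of the largest budget ε_m. -/
def lastIdx {m : ℕ} (hm : 0 < m) : Fin m := ⟨m - 1, Nat.sub_lt hm Nat.one_pos⟩

/-- Z = (n − n_m)(n − n_m + 1/4). -/
noncomputable def Zval {m : ℕ} (hm : 0 < m) (nn : Fin m → ℕ) : ℝ :=
  ((∑ j, (nn j : ℝ)) - nn (lastIdx hm)) * ((∑ j, (nn j : ℝ)) - nn (lastIdx hm) + 1 / 4)

/-- N-th square harmonic number H²_N = Σ_{k=1}^N 1/k². -/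
noncomputable def sqHarmonic (N : ℕ) : ℝ := ∑ k ∈ Finset.Icc 1 N, 1 / (k : ℝ) ^ 2

/-- Sampling error at `θ` is at most `N (N + 1/4)`, where `N` counts the users with budget
below `θ`. -/
lemma errS_le {m : ℕ} (ε : Fin m → ℝ) (nn : Fin m → ℕ) (hpos : ∀ j, 0 < ε j) (θ : ℝ) :
    errS ε nn θ ≤ (∑ k, if ε k < θ then (nn k : ℝ) else 0) *
      ((∑ k, if ε k < θ then (nn k : ℝ) else 0) + 1 / 4) := by
  have hp : ∀ k, ε k < θ → 0 ≤ samplingP ε k θ ∧ samplingP ε k θ ≤ 1 := by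
    intro k hk
    have h1 : 1 < Real.exp (ε k) := Real.one_lt_exp_iff.mpr (hpos k)
    have h2 : Real.exp (ε k) < Real.exp θ := Real.exp_lt_exp.mpr hk
    unfold samplingP
    exact ⟨div_nonneg (by linarith) (by linarith),
      (div_le_one (by linarith)).mpr (by linarith)⟩
  have hvar : (∑ k, if ε k < θ then (nn k : ℝ) * samplingP ε k θ * (1 - samplingP ε k θ) else 0)
      ≤ (∑ k, if ε k < θ then (nn k : ℝ) else 0) * (1 / 4) := by
    rw [Finset.sum_mul]
    refine Finset.sum_le_sum fun k _ => ?_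
    split_ifs
    · rw [mul_assoc]
      exact mul_le_mul_of_nonneg_left (by nlinarith [sq_nonneg (samplingP ε k θ - 1 / 2)])
        (Nat.cast_nonneg _)
    · simp
  have hbias_nonneg : 0 ≤ ∑ k, if ε k < θ then (nn k : ℝ) * (1 - samplingP ε k θ) else 0 := by
    refine Finset.sum_nonneg fun k _ => ?_
    split_ifs with hk
    · exact mul_nonneg (Nat.cast_nonneg _) (sub_nonneg.mpr (hp k hk).2)
    · rfl
  have hbias : (∑ k, if ε k < θ then (nn k : ℝ) * (1 - samplingP ε k θ) else 0)
      ≤ ∑ k, if ε k < θ then (nn k : ℝ) else 0 := by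
    refine Finset.sum_le_sum fun k _ => ?_
    split_ifs with hk
    · exact mul_le_of_le_one_right (Nat.cast_nonneg _) (by linarith [(hp k hk).1])
    · rfl
  have hsq := pow_le_pow_left₀ hbias_nonneg hbias 2
  unfold errS
  linarith

/-- There is no sampling error at the smallest budget. -/
lemma errS_firstIdx {m : ℕ} (hm : 0 < m) (ε : Fin m → ℝ) (nn : Fin m → ℕ)
    (hmono : StrictMono ε) : errS ε nn (ε (firstIdx hm)) = 0 := by
  have h : ∀ k, ¬ ε k < ε (firstIdx hm) := fun k =>
    not_lt.mpr (hmono.monotone (Fin.le_def.mpr (Nat.zero_le _)))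
  simp [errS, h]

/-- The number of users with budget below the largest one is `n - n_m`. -/
lemma sum_lt_lastIdx {m : ℕ} (hm : 0 < m) (ε : Fin m → ℝ) (nn : Fin m → ℕ)
    (hmono : StrictMono ε) :
    (∑ k, if ε k < ε (lastIdx hm) then (nn k : ℝ) else 0) =
      (∑ k, (nn k : ℝ)) - nn (lastIdx hm) := by
  have h : ∀ k, ε k < ε (lastIdx hm) ↔ k ≠ lastIdx hm := fun k => by
    have hk : k ≤ lastIdx hm := Fin.le_def.mpr (Nat.le_sub_one_of_lt k.isLt)
    rw [hmono.lt_iff_lt, lt_iff_le_and_ne]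
    exact and_iff_right hk
  rw [eq_sub_iff_add_eq, ← Finset.sum_erase_add _ _ (Finset.mem_univ (lastIdx hm)),
    ← Finset.sum_erase_add (f := fun k => (nn k : ℝ)) _ (Finset.mem_univ (lastIdx hm))]
  simp only [lt_irrefl, if_false, add_zero]
  congr 1
  exact Finset.sum_congr rfl fun k hk => if_pos ((h k).mpr (Finset.ne_of_mem_erase hk))

/-- For every β > 0, the OBS error of the β-scaled profile is at most
min(2I²/(βε_1)², Z + 2I²/(βε_m)²). -/
theorem obs_error_bound_scaled (m : ℕ) (hm : 0 < m) (ε : Fin m → ℝ) (nn : Fin m → ℕ)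
    (hpos : ∀ j, 0 < ε j) (hmono : StrictMono ε) (hcount : ∀ j, 0 < nn j)
    (I : ℝ) (hI : 0 < I) :
    ∀ β : ℝ, 0 < β →
      errO hm (fun j => β * ε j) nn I ≤
        min (2 * I ^ 2 / (β * ε (firstIdx hm)) ^ 2)
          (Zval hm nn + 2 * I ^ 2 / (β * ε (lastIdx hm)) ^ 2) := by
  intro β hβ
  have hpos' : ∀ j, 0 < β * ε j := fun j => mul_pos hβ (hpos j)
  have hmono' : StrictMono fun j => β * ε j := hmono.const_mul hβ
  refine le_min ?_ ?_
  · refine (Finset.inf'_le _ (Finset.mem_univ (firstIdx hm))).trans ?_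
    have h := errS_firstIdx hm _ nn hmono'
    simp only [errTot, errDP, h, zero_add, le_refl]
  · refine (Finset.inf'_le _ (Finset.mem_univ (lastIdx hm))).trans ?_
    have h := errS_le _ nn hpos' (β * ε (lastIdx hm))
    rw [sum_lt_lastIdx hm _ nn hmono'] at h
    simp only [errTot, errDP, Zval]
    gcongr
end

section
/- Let two budget profiles be given: profile P (integer m ≥ 1, strictly increasing positive real privacy budgets ε_1 < ⋯ < ε_m, positive integer counts n_1, …, n_m, n = Σ n_j, Z = (n − n_m)(n − n_m + 1/4)) and profile P̃ (integer q ≥ 1, strictly increasing positive real privacy budgets ε̃_1 < ⋯ < ε̃_q, positive integer counts ñ_1, …, ñ_q, ñ = Σ ñ_j, Z̃ = (ñ − ñ_q)(ñ − ñ_q + 1/4)), both with sensitivity I = 1. Let α > w_L ≥ 1 be integers. Then Σ_{k=1}^{w_L} errO_1^{P}(k) + (α − w_L + 1) · errO_1^{P̃}(1) ≤ min( (2/ε_1²)·H²_{w_L} , w_L·Z + (2/ε_m²)·H²_{w_L} ) + (α − w_L + 1) · min( 2/ε̃_1² , Z̃ + 2/ε̃_q² ). (This is the bound err^{(s,p)}_NOP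 in the proof of Theorem 3, case α > w_L, for Personalized Budget Absorption: the publication budget lower bound grows linearly for the first w_L slots and is then capped, yielding the capped profile P̃ with minimum budget ε̃_1 and maximum budget ε̃_q for the remaining α − w_L + 1 slots.) -/
open Finset

/-- The OBS error is at most the error at the smallest budget, where nothing is sampled away. -/
lemma errO_le_noise_first {m : ℕ} (hm : 0 < m) (ε : Fin m → ℝ) (nn : Fin m → ℕ) (I : ℝ)
    (hmono : Monotone ε) :
    errO hm ε nn I ≤ 2 * I ^ 2 / ε (firstIdx hm) ^ 2 := by
  refine (Finset.inf'_le _ (Finset.mem_univ (firstIdx hm))).trans ?_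
  have not_lt_first (k : Fin m) : ¬ ε k < ε (firstIdx hm) :=
    not_lt.mpr (hmono (Fin.mk_le_of_le_val (Nat.zero_le _)))
  simp [errTot, errS, errDP, not_lt_first]

lemma samplingP_mem_Icc {m : ℕ} (ε : Fin m → ℝ) (k : Fin m) {θ : ℝ} (hpos : 0 < ε k)
    (hlt : ε k < θ) : samplingP ε k θ ∈ Set.Icc (0 : ℝ) 1 := by
  have hk : 1 < Real.exp (ε k) := Real.one_lt_exp_iff.mpr hpos
  have hθ : Real.exp (ε k) < Real.exp θ := Real.exp_lt_exp.mpr hlt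
  unfold samplingP
  exact ⟨div_nonneg (by linarith) (by linarith), (div_le_one (by linarith)).mpr (by linarith)⟩

/-- At the largest budget, every sampled-out group contributes at most `1/4` of its size to the
variance and at most its size to the bias. -/
lemma errS_last_le_Zval {m : ℕ} (hm : 0 < m) (ε : Fin m → ℝ) (nn : Fin m → ℕ)
    (hpos : ∀ j, 0 < ε j) : errS ε nn (ε (lastIdx hm)) ≤ Zval hm nn := by
  set θ := ε (lastIdx hm)
  set S : ℝ := (∑ j, (nn j : ℝ)) - nn (lastIdx hm) with hS
  have sum_erase : S = ∑ k ∈ Finset.univ.erase (lastIdx hm), (nn k : ℝ) := by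
    rw [hS, ← Finset.add_sum_erase _ _ (Finset.mem_univ (lastIdx hm))]; ring
  have sum_below (f : Fin m → ℝ) : (∑ k, if ε k < θ then f k else 0)
      = ∑ k ∈ Finset.univ.erase (lastIdx hm), if ε k < θ then f k else 0 := by
    rw [← Finset.add_sum_erase _ _ (Finset.mem_univ (lastIdx hm)), if_neg (lt_irrefl _), zero_add]
  have variance_le : (∑ k, if ε k < θ then
      (nn k : ℝ) * samplingP ε k θ * (1 - samplingP ε k θ) else 0) ≤ S * (1 / 4) := by
    rw [sum_below, sum_erase, Finset.sum_mul]
    refine Finset.sum_le_sum fun k _ => ?_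
    have hn : (0 : ℝ) ≤ nn k := Nat.cast_nonneg _
    split_ifs
    · nlinarith [mul_nonneg hn (sq_nonneg (samplingP ε k θ - 1 / 2))]
    · positivity
  have bias_le : (∑ k, if ε k < θ then (nn k : ℝ) * (1 - samplingP ε k θ) else 0) ≤ S := by
    rw [sum_below, sum_erase]
    refine Finset.sum_le_sum fun k _ => ?_
    have hn : (0 : ℝ) ≤ nn k := Nat.cast_nonneg _
    split_ifs with h
    · exact mul_le_of_le_one_right hn (by linarith [(samplingP_mem_Icc ε k (hpos k) h).1])
    · exact hn
  have bias_nonneg :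
      0 ≤ ∑ k, if ε k < θ then (nn k : ℝ) * (1 - samplingP ε k θ) else 0 := by
    refine Finset.sum_nonneg fun k _ => ?_
    split_ifs with h
    · exact mul_nonneg (Nat.cast_nonneg _)
        (by linarith [(samplingP_mem_Icc ε k (hpos k) h).2])
    · exact le_rfl
  calc errS ε nn θ ≤ S * (1 / 4) + S ^ 2 :=
        add_le_add variance_le (pow_le_pow_left₀ bias_nonneg bias_le 2)
    _ = Zval hm nn := by rw [Zval, ← hS]; ring

lemma errO_le_Zval_add_noise_last {m : ℕ} (hm : 0 < m) (ε : Fin m → ℝ) (nn : Fin m → ℕ) (I : ℝ)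
    (hpos : ∀ j, 0 < ε j) :
    errO hm ε nn I ≤ Zval hm nn + 2 * I ^ 2 / ε (lastIdx hm) ^ 2 :=
  (Finset.inf'_le _ (Finset.mem_univ (lastIdx hm))).trans
    (add_le_add_left (errS_last_le_Zval hm ε nn hpos) _)

/-- Bound err^{(s,p)}_NOP in the proof of Theorem 3, case α > w_L, for Personalized
Budget Absorption, with the original profile P and the capped profile P̃. -/
theorem pba_skipped_obs_error_bound_capped
    (m : ℕ) (hm : 0 < m) (ε : Fin m → ℝ) (nn : Fin m → ℕ)
    (hpos : ∀ j, 0 < ε j) (hmono : StrictMono ε) (hcount : ∀ j, 0 < nn j)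
    (q : ℕ) (hq : 0 < q) (ε' : Fin q → ℝ) (nn' : Fin q → ℕ)
    (hpos' : ∀ j, 0 < ε' j) (hmono' : StrictMono ε') (hcount' : ∀ j, 0 < nn' j)
    (wL α : ℕ) (hwL : 1 ≤ wL) (hα : wL < α) :
    ∑ k ∈ Finset.Icc 1 wL, errO hm (fun j => (k : ℝ) * ε j) nn 1
        + ((α - wL + 1 : ℕ) : ℝ) * errO hq ε' nn' 1 ≤
      min ((2 / (ε (firstIdx hm)) ^ 2) * sqHarmonic wL)
          ((wL : ℝ) * Zval hm nn + (2 / (ε (lastIdx hm)) ^ 2) * sqHarmonic wL)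
        + ((α - wL + 1 : ℕ) : ℝ) *
            min (2 / (ε' (firstIdx hq)) ^ 2)
              (Zval hq nn' + 2 / (ε' (lastIdx hq)) ^ 2) := by
  have noise_scaled (c : ℝ) (k : ℕ) :
      2 * (1 : ℝ) ^ 2 / ((k : ℝ) * c) ^ 2 = 2 / c ^ 2 * (1 / (k : ℝ) ^ 2) := by
    rw [one_pow, mul_one, mul_pow, div_mul_div_comm, mul_one, mul_comm]
  refine add_le_add (le_min ?_ ?_) (mul_le_mul_of_nonneg_left (le_min ?_ ?_) (Nat.cast_nonneg _))
  · rw [sqHarmonic, Finset.mul_sum]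
    refine Finset.sum_le_sum fun k _ => ?_
    rw [← noise_scaled]
    exact errO_le_noise_first hm _ nn 1 (hmono.monotone.const_mul (Nat.cast_nonneg k))
  · have sum_Z : (wL : ℝ) * Zval hm nn = ∑ _k ∈ Finset.Icc 1 wL, Zval hm nn := by simp
    rw [sqHarmonic, Finset.mul_sum, sum_Z, ← Finset.sum_add_distrib]
    refine Finset.sum_le_sum fun k hk => ?_
    rw [← noise_scaled]
    have hk0 : (0 : ℝ) < k := Nat.cast_pos.mpr (Finset.mem_Icc.mp hk).1
    exact errO_le_Zval_add_noise_last hm _ nn 1 fun j => mul_pos hk0 (hpos j)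
  · simpa using errO_le_noise_first hq ε' nn' 1 hmono'.monotone
  · simpa using errO_le_Zval_add_noise_last hq ε' nn' 1 hpos'
end
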